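/- Let ρ = |ψ⟩⟨ψ| be an n-qubit pure state and S ⊆ Fin n nonempty with |S| = s. Fix ε > 0 and δ ∈ (0,1), and set N_B = ⌈8 log(1/δ)⌉ and B = ⌈4 (3/2)^s / ε²⌉, L = N_B·B. Consider L independent rounds: in round l, U_l = ⊗_{i∈S} U_{l,i} is a product of independent Haar-random elements of U(2) and, conditionally on U_l, the outcomes Z_{l,1}, Z_{l,2} are i.i.d. with law P_{U_l}(z) = tr(U_l ρ U_l† |z⟩⟨z|). For each batch b ∈ {1,…,N_B}, define the batch mean C̄^(b) = 1 − (3/2)^s · (1/B) Σ_{l=(b−1)B+1}^{bB} 1{Z_{l,1} = Z_{l,2}}. Then P( |median(C̄^(1), …, C̄^(N_B)) − C_ψ(S)| ≥ ε ) ≤ δ. -/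

import Mathlib

open Matrix MeasureTheory
open scoped BigOperators ComplexConjugate Kronecker

/-- `n`-qubit operators: matrices indexed by functions `Fin n → Fin 2`. -/
abbrev QMat (n : ℕ) : Type := Matrix (Fin n → Fin 2) (Fin n → Fin 2) ℂ

/-- Combine an assignment on `α` and one on its complement into a full index. -/
noncomputable def embedIdx {n : ℕ} (α : Finset (Fin n)) (i : {x : Fin n // x ∈ α} → Fin 2)
    (k : {x : Fin n // x ∉ α} → Fin 2) : Fin n → Fin 2 :=
  fun x => if h : x ∈ α then i ⟨x, h⟩ else k ⟨x, h⟩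

/-- The reduced density matrix on the qubits in `α` (partial trace over the rest). -/
noncomputable def reduced {n : ℕ} (ρ : QMat n) (α : Finset (Fin n)) :
    Matrix ({x : Fin n // x ∈ α} → Fin 2) ({x : Fin n // x ∈ α} → Fin 2) ℂ :=
  fun i j => ∑ k : ({x : Fin n // x ∉ α} → Fin 2), ρ (embedIdx α i k) (embedIdx α j k)

/-- The concentratable entanglement `C_ψ(S) = 1 - 2^{-|S|} ∑_{α ⊆ S} tr(ρ_α²)`. -/
noncomputable def CE {n : ℕ} (ρ : QMat n) (S : Finset (Fin n)) : ℝ :=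
  1 - (1 / 2 : ℝ) ^ S.card *
    ∑ α ∈ S.powerset, (Matrix.trace (reduced ρ α * reduced ρ α)).re

/-- Tensor product of single-qubit operators on the qubits in `S`, identity elsewhere. -/
noncomputable def localOp {n : ℕ} (S : Finset (Fin n))
    (V : {i : Fin n // i ∈ S} → Matrix (Fin 2) (Fin 2) ℂ) : QMat n :=
  fun x y => ∏ i : Fin n,
    if h : i ∈ S then V ⟨i, h⟩ (x i) (y i)
    else (if x i = y i then 1 else 0)

/-- Projector onto computational basis state `z` on the qubits in `S`, identity elsewhere. -/
noncomputable def projZ {n : ℕ} (S : Finset (Fin n)) (z : {i : Fin n // i ∈ S} → Fin 2) : QMat n :=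
  fun x y => ∏ i : Fin n,
    if h : i ∈ S then (if x i = z ⟨i, h⟩ ∧ y i = z ⟨i, h⟩ then 1 else 0)
    else (if x i = y i then 1 else 0)

noncomputable instance : MeasurableSpace (Matrix.unitaryGroup (Fin 2) ℂ) := borel _
instance : BorelSpace (Matrix.unitaryGroup (Fin 2) ℂ) := ⟨rfl⟩

/-- The Born probability `P_U(z) = tr(U ρ U† |z⟩⟨z|)` of outcome `z` after the local
randomized measurement given by the single-qubit unitaries `V i`, `i ∈ S`. -/
noncomputable def born {n : ℕ} (ρ : QMat n) (S : Finset (Fin n))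
    (V : {i : Fin n // i ∈ S} → Matrix.unitaryGroup (Fin 2) ℂ)
    (z : {i : Fin n // i ∈ S} → Fin 2) : ℝ :=
  (Matrix.trace (localOp S (fun i => (V i : Matrix (Fin 2) (Fin 2) ℂ)) * ρ *
      (localOp S (fun i => (V i : Matrix (Fin 2) (Fin 2) ℂ)))ᴴ * projZ S z)).re

/-- The Born distribution on outcome strings, as a measure. -/
noncomputable def bornMeasure {n : ℕ} (ρ : QMat n) (S : Finset (Fin n))
    (V : {i : Fin n // i ∈ S} → Matrix.unitaryGroup (Fin 2) ℂ) :
    Measure ({i : Fin n // i ∈ S} → Fin 2) :=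
  ∑ z : ({i : Fin n // i ∈ S} → Fin 2), ENNReal.ofReal (born ρ S V z) • Measure.dirac z

/-- Joint law of one round of the LRM experiment: a tuple of Haar-random single-qubit
unitaries together with `K` conditionally i.i.d. Born-distributed outcomes. -/
noncomputable def jointRound {n : ℕ} (μ : Measure (Matrix.unitaryGroup (Fin 2) ℂ))
    (ρ : QMat n) (S : Finset (Fin n)) (K : ℕ) :
    Measure (({i : Fin n // i ∈ S} → Matrix.unitaryGroup (Fin 2) ℂ) ×
      (Fin K → ({i : Fin n // i ∈ S} → Fin 2))) :=
  (Measure.pi fun _ : {i : Fin n // i ∈ S} => μ).bind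
    (fun V => (Measure.pi fun _ : Fin K => bornMeasure ρ S V).map (Prod.mk V))

/-- `m₀` is a median of `x₁, …, x_m`: at least half of the `xᵢ` satisfy `xᵢ ≤ m₀` and at
least half satisfy `xᵢ ≥ m₀`. -/
def IsMedian {m : ℕ} (x : Fin m → ℝ) (m₀ : ℝ) : Prop :=
  m ≤ 2 * (Finset.univ.filter fun i => x i ≤ m₀).card ∧
  m ≤ 2 * (Finset.univ.filter fun i => m₀ ≤ x i).card

/-!
For fixed local rotations two shots collide with probability `∑ z, P(z)²`. Expanding in the entries
of `ρ`, the average over the rotations is a product over the qubits of `S` of fourth moments of a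
row of a Haar unitary, and such a moment is `1/6` times the sum of the two ways to pair the
conjugated entries with the unconjugated ones. Choosing the exchanging pairing exactly on `α ⊆ S`
gives `tr ρ_α²` (the swap trick); summing over the `2 ^ s` outcomes `z`, the collision probability
is `3 ^ (-s) ∑ α ⊆ S, tr ρ_α²`.

Hence `1 - (3/2) ^ s 1{Z₁ = Z₂}` is an unbiased estimator of `C(S)` with values in
`[1 - (3/2) ^ s, 1]`, and since `C(S) ≥ 0` the Bhatia–Davis inequality bounds its variance by
`(3/2) ^ s`. By Chebyshev each batch mean errs by at least `ε` with probability at most `1/4`. A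
median can only err by `ε` if at least half of the batch means do, which by Hoeffding has
probability at most `exp (-N_B / 8) ≤ δ`.
-/

section MedianOfMeans

open ProbabilityTheory

variable {Ω : Type*} [MeasurableSpace Ω] {ν : Measure Ω} [IsProbabilityMeasure ν]

variable (ν) in
lemma measurePreserving_curry_pi (ι κ : Type*) [Fintype ι] [Fintype κ] :
    MeasurePreserving (fun (ω : ι × κ → Ω) i k => ω (i, k))
      (Measure.pi fun _ => ν) (Measure.pi fun _ => Measure.pi fun _ => ν) := by
  have h := Measure.infinitePi_map_curry (fun (_ : ι) (_ : κ) => ν)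
  simp only [Measure.infinitePi_eq_pi] at h
  exact ⟨by fun_prop, h⟩

open scoped Classical in
lemma pi_real_card_mem_ge_le {ι : Type*} [Fintype ι] {A : Set Ω} (hA : NullMeasurableSet A ν)
    {τ : ℝ} (hτ : 0 ≤ τ) :
    (Measure.pi fun _ : ι => ν).real
        {ω | Fintype.card ι * (ν.real A + τ) ≤ (Finset.univ.filter fun i => ω i ∈ A).card} ≤
      Real.exp (-(2 * Fintype.card ι * τ ^ 2)) := by
  set f : Ω → ℝ := A.indicator 1
  have hf : AEMeasurable f ν := aemeasurable_one.indicator₀ hA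
  have hmean : ν[f] = ν.real A := by
    simp [f, integral_indicator₀ hA, Measure.real]
  have hindep : iIndepFun (fun i (ω : ι → Ω) => f (ω i) - ν[f]) (Measure.pi fun _ => ν) :=
    iIndepFun_pi (X := fun _ x => f x - ν[f]) fun _ => hf.sub_const _
  have hf01 : ∀ x, f x ∈ Set.Icc 0 1 := fun x =>
    ⟨Set.indicator_nonneg (by simp) x, Set.indicator_le_self' (by simp) x⟩
  have hsub : ∀ i : ι, HasSubgaussianMGF (fun ω : ι → Ω => f (ω i) - ν[f])
      ((‖(1 : ℝ) - 0‖₊ / 2) ^ 2) (Measure.pi fun _ => ν) := fun i => by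
    have heval := measurePreserving_eval (fun _ : ι => ν) i
    refine HasSubgaussianMGF.of_map (X := fun x => f x - ν[f]) heval.aemeasurable ?_
    rw [heval.map_eq]
    exact hasSubgaussianMGF_of_mem_Icc hf (.of_forall hf01)
  have hcount : ∀ ω : ι → Ω, ∑ i, (f (ω i) - ν[f]) =
      (Finset.univ.filter fun i => ω i ∈ A).card - Fintype.card ι * ν.real A := fun ω => by
    rw [Finset.sum_sub_distrib, hmean]
    simp [f, Set.indicator_apply]
  have hoeffding := HasSubgaussianMGF.measure_sum_ge_le_of_iIndepFun hindep
    (s := Finset.univ) (fun i _ => hsub i) (ε := Fintype.card ι * τ) (by positivity)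
  simp only [hcount, le_sub_iff_add_le', ← mul_add] at hoeffding
  refine hoeffding.trans_eq (congrArg _ ?_)
  rcases eq_or_ne (Fintype.card ι : ℝ) 0 with h | h
  · simp [h]
  · simp only [sub_zero, nnnorm_one, one_div, inv_pow, Finset.sum_const, Finset.card_univ,
      nsmul_eq_mul, NNReal.coe_mul, NNReal.coe_natCast, NNReal.coe_inv, NNReal.coe_pow,
      NNReal.coe_ofNat]
    field_simp

open scoped Classical in
lemma pi_card_le_two_mul_card_mem_le {ι : Type*} [Fintype ι] {A : Set Ω}
    (hA : NullMeasurableSet A ν) (hA4 : ν.real A ≤ 1 / 4) {δ : ℝ} (hδ : 0 < δ)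
    (hN : 8 * Real.log (1 / δ) ≤ Fintype.card ι) :
    (Measure.pi fun _ : ι => ν)
        {ω | Fintype.card ι ≤ 2 * (Finset.univ.filter fun i => ω i ∈ A).card} ≤
      ENNReal.ofReal δ := by
  rw [← ofReal_measureReal]
  refine ENNReal.ofReal_le_ofReal ?_
  calc _ ≤ (Measure.pi fun _ : ι => ν).real {ω | Fintype.card ι * (ν.real A + 1 / 4) ≤
        (Finset.univ.filter fun i => ω i ∈ A).card} := by
        refine measureReal_mono fun ω hω => ?_
        have hω' : (Fintype.card ι : ℝ) ≤ 2 * (Finset.univ.filter fun i => ω i ∈ A).card :=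
          mod_cast hω
        calc Fintype.card ι * (ν.real A + 1 / 4) ≤ Fintype.card ι * (1 / 4 + 1 / 4) := by gcongr
          _ ≤ _ := by linarith
    _ ≤ Real.exp (-(2 * Fintype.card ι * (1 / 4) ^ 2)) :=
        pi_real_card_mem_ge_le hA (by norm_num)
    _ ≤ Real.exp (Real.log δ) := by
        rw [one_div, Real.log_inv] at hN
        gcongr
        linarith
    _ = δ := Real.exp_log hδ

lemma pi_sampleMean_deviation_le {X : Ω → ℝ} (hX : MemLp X 2 ν) {ε : ℝ} (hε : 0 < ε) {B : ℕ}
    (hB : 0 < B) :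
    (Measure.pi fun _ : Fin B => ν).real {x | ε ≤ |(1 / (B : ℝ)) * ∑ l, X (x l) - ν[X]|} ≤
      Var[X; ν] / (B * ε ^ 2) := by
  set P := Measure.pi fun _ : Fin B => ν
  set Y : (Fin B → Ω) → ℝ := fun x => (1 / (B : ℝ)) * ∑ l, X (x l)
  have hB' : (B : ℝ) ≠ 0 := mod_cast hB.ne'
  have hXl : ∀ l : Fin B, MemLp (fun x : Fin B → Ω => X (x l)) 2 P := fun l =>
    hX.comp_measurePreserving (measurePreserving_eval (fun _ : Fin B => ν) l)
  have hY : MemLp Y 2 P := (memLp_finsetSum _ fun l _ => hXl l).const_mul _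
  have hmean : P[Y] = ν[X] := by
    have hcoord : ∀ l : Fin B, ∫ x, X (x l) ∂P = ν[X] := fun l =>
      integral_comp_eval (μ := fun _ : Fin B => ν) (i := l) hX.aestronglyMeasurable
    simp_rw [Y, integral_const_mul,
      integral_finsetSum _ fun l _ => (hXl l).integrable one_le_two, hcoord]
    simp [hB']
  have hvar : Var[Y; P] = Var[X; ν] / B := by
    have hsum : Var[fun x => ∑ l, X (x l); P] = B * Var[X; ν] := by
      simpa [Finset.sum_fn] using
        variance_sum_pi (μ := fun _ : Fin B => ν) (X := fun _ => X) fun _ => hX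
    rw [variance_const_mul, hsum]
    field_simp
  have hchebyshev := meas_ge_le_variance_div_sq hY hε
  rw [hmean, hvar, div_div] at hchebyshev
  exact ENNReal.toReal_le_of_le_ofReal (by have := variance_nonneg X ν; positivity) hchebyshev

lemma IsMedian.card_le_two_mul_card_le_abs_sub {N : ℕ} {x : Fin N → ℝ} {m c ε : ℝ}
    (hm : IsMedian x m) (hε : ε ≤ |m - c|) :
    N ≤ 2 * (Finset.univ.filter fun i => ε ≤ |x i - c|).card := by
  rcases le_abs.1 hε with h | h
  · refine hm.2.trans (Nat.mul_le_mul_left 2 (Finset.card_le_card ?_))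
    exact Finset.monotone_filter_right _ fun i _ hi => le_abs.2 (.inl (by linarith))
  · refine hm.1.trans (Nat.mul_le_mul_left 2 (Finset.card_le_card ?_))
    exact Finset.monotone_filter_right _ fun i _ hi => le_abs.2 (.inr (by linarith))

lemma pi_exists_isMedian_deviation_le {X : Ω → ℝ} (hX : MemLp X 2 ν) {ε δ : ℝ} (hε : 0 < ε)
    (hδ : 0 < δ) {N B : ℕ} (hN : 8 * Real.log (1 / δ) ≤ N) (hB : 0 < B)
    (hvar : 4 * Var[X; ν] ≤ B * ε ^ 2) :
    (Measure.pi fun _ : Fin N × Fin B => ν)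
      {ω | ∃ m, IsMedian (fun b => (1 / (B : ℝ)) * ∑ l, X (ω (b, l))) m ∧ ε ≤ |m - ν[X]|} ≤
      ENNReal.ofReal δ := by
  classical
  set A : Set (Fin B → Ω) := {x | ε ≤ |(1 / (B : ℝ)) * ∑ l, X (x l) - ν[X]|}
  have hA : NullMeasurableSet A (Measure.pi fun _ => ν) := by
    have hXl : ∀ l : Fin B, AEMeasurable (fun x : Fin B → Ω => X (x l)) (Measure.pi fun _ => ν) :=
      fun l => hX.aemeasurable.comp_quasiMeasurePreserving
        (measurePreserving_eval (fun _ : Fin B => ν) l).quasiMeasurePreserving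
    exact nullMeasurableSet_le aemeasurable_const
      (((Finset.univ.aemeasurable_fun_sum fun l _ => hXl l).const_mul _).sub_const _).abs
  have hA4 : (Measure.pi fun _ => ν).real A ≤ 1 / 4 := by
    refine (pi_sampleMean_deviation_le hX hε hB).trans ?_
    rw [div_le_iff₀ (by positivity)]
    linarith
  have hcurry := measurePreserving_curry_pi ν (Fin N) (Fin B)
  calc _ ≤ (Measure.pi fun _ : Fin N × Fin B => ν) ((fun ω b l => ω (b, l)) ⁻¹'
        {x | Fintype.card (Fin N) ≤ 2 * (Finset.univ.filter fun b => x b ∈ A).card}) := by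
        refine measure_mono ?_
        rintro ω ⟨m, hm, hdev⟩
        rw [Set.mem_preimage, Set.mem_ofPred_eq, Fintype.card_fin]
        exact hm.card_le_two_mul_card_le_abs_sub hdev
    _ ≤ (Measure.pi fun _ : Fin N => Measure.pi fun _ : Fin B => ν)
        {x | Fintype.card (Fin N) ≤ 2 * (Finset.univ.filter fun b => x b ∈ A).card} := by
        rw [← hcurry.map_eq]
        exact Measure.le_map_apply hcurry.aemeasurable _
    _ ≤ ENNReal.ofReal δ := pi_card_le_two_mul_card_mem_le hA hA4 hδ (by simpa using hN)

end MedianOfMeans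

section HaarRowMoments

instance compactSpace_unitaryGroup (m : Type*) [Fintype m] [DecidableEq m] :
    CompactSpace (unitaryGroup m ℂ) := by
  have hK : IsCompact (Set.univ.pi fun _ : m => Set.univ.pi fun _ : m =>
      Metric.closedBall (0 : ℂ) 1) :=
    isCompact_univ_pi fun _ => isCompact_univ_pi fun _ => isCompact_closedBall _ _
  exact isCompact_iff_compactSpace.1 <| IsCompact.of_isClosed_subset (X := Matrix m m ℂ) hK
    isClosed_unitary fun U hU i _ j _ =>
      mem_closedBall_zero_iff.2 (entry_norm_bound_of_unitary hU i j)

lemma isMulRightInvariant_of_compactSpace {G : Type*} [Group G] [TopologicalSpace G]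
    [IsTopologicalGroup G] [CompactSpace G] [MeasurableSpace G] [BorelSpace G] (μ : Measure G)
    [μ.IsHaarMeasure] [IsProbabilityMeasure μ] : μ.IsMulRightInvariant where
  map_mul_right_eq_self g := by
    have : IsProbabilityMeasure (μ.map (· * g)) :=
      Measure.isProbabilityMeasure_map (by fun_prop)
    have : (μ.map (· * g)).IsHaarMeasure := Measure.isHaarMeasure_map_mul_right μ g
    exact Measure.isHaarMeasure_eq_of_isProbabilityMeasure _ _

lemma reflection_mem_unitaryGroup {m : Type*} [Fintype m] [DecidableEq m] {v : m → ℂ} {r : ℝ}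
    (hv : r * (star v ⬝ᵥ v) = 2) :
    1 - (r : ℂ) • vecMulVec v (star v) ∈ unitaryGroup m ℂ := by
  set P := vecMulVec v (star v)
  have hP : (r : ℂ) • (P * P) = (2 : ℂ) • P := by
    rw [vecMulVec_mul_vecMulVec, vecMulVec_smul, smul_smul, hv]
  have hPstar : Pᴴ = P := by rw [conjTranspose_vecMulVec, star_star]
  rw [mem_unitaryGroup_iff, star_eq_conjTranspose, conjTranspose_sub, conjTranspose_smul, hPstar,
    conjTranspose_one, Complex.star_def, Complex.conj_ofReal, sub_mul, mul_sub, mul_sub, mul_one,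
    one_mul, mul_one, smul_mul_smul_comm, mul_smul, hP]
  module

lemma exists_unitary_mixing_columns {m : Type*} [Fintype m] [DecidableEq m] {a c : m}
    (hac : a ≠ c) : ∃ W ∈ unitaryGroup m ℂ, ∀ (V : Matrix m m ℂ) (z : m),
      (V * W) z a = V z a * (3 / 5 : ℝ) + V z c * (4 / 5 : ℝ) ∧
      (V * W) z c = V z a * (4 / 5 : ℝ) + V z c * (-(3 / 5) : ℝ) := by
  -- The reflection along `e_a - 2 e_c`.
  set v : m → ℂ := Pi.single a 1 - Pi.single c 2
  have hva : v a = 1 := by simp [v, hac]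
  have hvc : v c = -2 := by simp [v, hac.symm]
  have hv : ((2 / 5 : ℝ) : ℂ) * (star v ⬝ᵥ v) = 2 := by
    simp only [v, dotProduct_sub, dotProduct_single, Pi.star_apply, hva, hvc]
    norm_num [hva, hvc]
  refine ⟨_, reflection_mem_unitaryGroup hv, fun V z => ?_⟩
  have hVv : (V *ᵥ v) z = V z a - 2 * V z c := by simp [v, mulVec_sub, mul_comm]
  have hentry (j : m) : (V * (1 - ((2 / 5 : ℝ) : ℂ) • vecMulVec v (star v))) z j =
      V z j - 2 / 5 * ((V z a - 2 * V z c) * star (v j)) := by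
    simp [mul_sub, mul_vecMulVec, vecMulVec_apply, hVv]
  rw [hentry, hentry, hva, hvc, star_one, star_neg, star_ofNat]
  constructor <;> push_cast <;> ring

variable {m : Type*} [Fintype m] [DecidableEq m] [MeasurableSpace (unitaryGroup m ℂ)]

/-- The fourth moment `E[V_za conj(V_zb) V_zc conj(V_zd)]` of the entries of row `z` of a random
unitary matrix `V`. -/
noncomputable def rowMoment (μ : Measure (unitaryGroup m ℂ)) (z a b c d : m) : ℂ :=
  ∫ V, V.1 z a * star (V.1 z b) * (V.1 z c * star (V.1 z d)) ∂μ

lemma rowMoment_swap_left (μ : Measure (unitaryGroup m ℂ)) (z a b c d : m) :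
    rowMoment μ z c b a d = rowMoment μ z a b c d := by
  simp only [rowMoment]
  congr! 2 with V
  ring

lemma rowMoment_comm (μ : Measure (unitaryGroup m ℂ)) (z a b c d : m) :
    rowMoment μ z c d a b = rowMoment μ z a b c d := by
  simp only [rowMoment, mul_comm]

variable [BorelSpace (unitaryGroup m ℂ)] (μ : Measure (unitaryGroup m ℂ))

lemma rowMoment_eq_integral_mul_right [μ.IsMulRightInvariant] {W : Matrix m m ℂ}
    (hW : W ∈ unitaryGroup m ℂ) (z a b c d : m) :
    rowMoment μ z a b c d = ∫ V, (V.1 * W) z a * star ((V.1 * W) z b) *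
      ((V.1 * W) z c * star ((V.1 * W) z d)) ∂μ :=
  (integral_mul_right_eq_self _ (⟨W, hW⟩ : unitaryGroup m ℂ)).symm

lemma rowMoment_eq_phase_mul [μ.IsMulRightInvariant] {φ : m → ℂ}
    (hφ : ∀ i, φ i * star (φ i) = 1) (z a b c d : m) :
    rowMoment μ z a b c d = φ a * star (φ b) * (φ c * star (φ d)) * rowMoment μ z a b c d := by
  have hW : diagonal φ ∈ unitaryGroup m ℂ := by
    rw [mem_unitaryGroup_iff, star_eq_conjTranspose, diagonal_conjTranspose, diagonal_mul_diagonal]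
    simp only [Pi.star_apply, hφ, diagonal_one]
  conv_lhs => rw [rowMoment_eq_integral_mul_right μ hW]
  rw [rowMoment, ← integral_const_mul]
  congr! 2
  simp only [mul_diagonal, star_mul']
  ring

lemma rowMoment_eq_zero [μ.IsMulRightInvariant] {a b c d : m} (z : m)
    (h₁ : ¬ (a = b ∧ c = d)) (h₂ : ¬ (a = d ∧ c = b)) :
    rowMoment μ z a b c d = 0 := by
  -- Multiplying column `k` by the phase `i` multiplies the moment by a nontrivial power of `i`.
  obtain ⟨k, hk⟩ : ∃ k, (k = a ∨ k = c) ↔ ¬ (k = b ∨ k = d) := by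
    by_contra! h
    grind [h a, h b, h c, h d]
  set φ : m → ℂ := fun i => if k = i then Complex.I else 1
  have hφ : ∀ i, φ i * star (φ i) = 1 := fun i => by by_cases h : k = i <;> simp [φ, h]
  have hphase : φ a * star (φ b) * (φ c * star (φ d)) ≠ 1 := by
    by_cases k = a <;> by_cases k = b <;> by_cases k = c <;> by_cases k = d <;>
      simp_all [φ, Complex.ext_iff] <;> norm_num
  exact (mul_left_eq_self₀.1 (rowMoment_eq_phase_mul μ hφ z a b c d).symm).resolve_left hphase

variable [IsProbabilityMeasure μ]

lemma integrable_rowMoment (z a b c d : m) : Integrable (fun V : unitaryGroup m ℂ =>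
    V.1 z a * star (V.1 z b) * (V.1 z c * star (V.1 z d))) μ := by
  have h (j : m) : Continuous fun V : unitaryGroup m ℂ => V.1 z j :=
    continuous_subtype_val.matrix_elem z j
  exact (((h a).mul (h b).star).mul ((h c).mul (h d).star)).integrable_of_hasCompactSupport
    (.of_compactSpace _)

lemma integral_quartic_eq_sum_rowMoment {κ : Type*} [Fintype κ] (z : m) (e : κ → m) (u : κ → ℂ) :
    ∫ V : unitaryGroup m ℂ, (∑ i, V.1 z (e i) * u i) * star (∑ i, V.1 z (e i) * u i) *
        ((∑ i, V.1 z (e i) * u i) * star (∑ i, V.1 z (e i) * u i)) ∂μ =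
      ∑ i, ∑ j, ∑ k, ∑ l, u i * star (u j) * (u k * star (u l)) *
        rowMoment μ z (e i) (e j) (e k) (e l) := by
  have hint (i j k l : κ) := (integrable_rowMoment μ z (e i) (e j) (e k) (e l)).const_mul
    (u i * star (u j) * (u k * star (u l)))
  simp only [rowMoment, ← integral_const_mul, ← Fintype.sum_prod_type']
  rw [← integral_finsetSum _ fun _ _ => hint _ _ _ _]
  congr! 2
  rw [star_sum, Finset.sum_mul_sum]
  simp_rw [Fintype.sum_prod_type, Finset.sum_mul, Finset.mul_sum]
  refine Finset.sum_congr rfl fun i _ => Finset.sum_congr rfl fun j _ =>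
    Finset.sum_congr rfl fun k _ => Finset.sum_congr rfl fun l _ => ?_
  rw [star_mul', star_mul']
  ring

lemma sum_rowMoment_eq_one (z : m) : ∑ a, ∑ c, rowMoment μ z a a c c = 1 := by
  have hrow (V : unitaryGroup m ℂ) : ∑ a, V.1 z a * star (V.1 z a) = 1 := by
    simpa [mul_apply, star_apply] using congrFun (congrFun (mem_unitaryGroup_iff.1 V.2) z) z
  simp only [rowMoment, ← Fintype.sum_prod_type']
  rw [← integral_finsetSum _ fun _ _ => integrable_rowMoment μ z _ _ _ _]
  simp_rw [Fintype.sum_prod_type, ← Finset.mul_sum, hrow, mul_one, hrow]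
  simp

variable [μ.IsMulRightInvariant]

lemma integral_quartic_pair (z : m) {a c : m} (hac : a ≠ c) (x y : ℝ) :
    ∫ V : unitaryGroup m ℂ, (V.1 z a * x + V.1 z c * y) * star (V.1 z a * x + V.1 z c * y) *
        ((V.1 z a * x + V.1 z c * y) * star (V.1 z a * x + V.1 z c * y)) ∂μ =
      x ^ 4 * rowMoment μ z a a a a + y ^ 4 * rowMoment μ z c c c c +
        4 * x ^ 2 * y ^ 2 * rowMoment μ z a a c c := by
  have hexpand := integral_quartic_eq_sum_rowMoment μ z ![a, c] ![(x : ℂ), y]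
  simp only [Fin.sum_univ_two, cons_val_zero, cons_val_one, Complex.star_def,
    Complex.conj_ofReal] at hexpand
  simp only [Complex.star_def]
  rw [hexpand]
  have hzero (a' b' c' d' : m) := rowMoment_eq_zero μ (a := a') (b := b') (c := c') (d := d') z
  simp only [hac, hac.symm, hzero, not_false_eq_true, and_self, and_false, and_true]
  have hccaa := rowMoment_comm μ z a a c c
  have hcaac := rowMoment_swap_left μ z a a c c
  have hacca := (rowMoment_swap_left μ z c c a a).trans hccaa
  rw [hccaa, hcaac, hacca]
  ring

lemma rowMoment_diag_eq (z : m) {a c : m} (hac : a ≠ c) :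
    rowMoment μ z a a a a = rowMoment μ z c c c c ∧
      rowMoment μ z a a a a = 2 * rowMoment μ z a a c c := by
  obtain ⟨W, hW, hVW⟩ := exists_unitary_mixing_columns hac
  have ha := rowMoment_eq_integral_mul_right μ hW z a a a a
  have hc := rowMoment_eq_integral_mul_right μ hW z c c c c
  simp only [hVW, integral_quartic_pair μ z hac] at ha hc
  push_cast at ha hc
  constructor
  · linear_combination 625 / 800 * ha - 625 / 800 * hc
  · linear_combination 425 / 288 * ha + 25 / 36 * hc

theorem rowMoment_eq (z a b c d : m) :
    rowMoment μ z a b c d = ((Fintype.card m : ℂ) * (Fintype.card m + 1))⁻¹ *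
      ((if a = b ∧ c = d then 1 else 0) + if a = d ∧ c = b then 1 else 0) := by
  set A := rowMoment μ z z z z z
  have hdiag (a c : m) : rowMoment μ z a a c c = A / 2 * (1 + if a = c then 1 else 0) := by
    have hA : rowMoment μ z a a a a = A := by
      rcases eq_or_ne a z with rfl | h
      exacts [rfl, (rowMoment_diag_eq μ z h).1]
    rcases eq_or_ne a c with rfl | h
    · rw [hA, if_pos rfl]; ring
    · rw [if_neg h, ← hA, (rowMoment_diag_eq μ z h).2]; ring
  have hA : A / 2 = ((Fintype.card m : ℂ) * (Fintype.card m + 1))⁻¹ := by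
    have hsum := sum_rowMoment_eq_one μ z
    simp only [hdiag, ← Finset.mul_sum, Finset.sum_add_distrib, Finset.sum_const, Finset.card_univ,
      Finset.sum_ite_eq, Finset.mem_univ, if_true, nsmul_eq_mul, mul_one] at hsum
    exact eq_inv_of_mul_eq_one_left (by linear_combination hsum)
  by_cases h₁ : a = b ∧ c = d
  · obtain ⟨rfl, rfl⟩ := h₁
    simp [hdiag, hA, eq_comm (a := c)]
  by_cases h₂ : a = d ∧ c = b
  · obtain ⟨rfl, rfl⟩ := h₂
    rw [← rowMoment_swap_left μ, hdiag, hA]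
    simp [eq_comm (a := c), add_comm]
  · simp [rowMoment_eq_zero μ z h₁ h₂, h₁, h₂]

end HaarRowMoments

section ReducedDensityMatrix

open scoped ComplexOrder

variable {n : ℕ}

lemma embedIdx_of_mem {α : Finset (Fin n)} (i k) (x : {x : Fin n // x ∈ α}) :
    embedIdx α i k x = i x := by
  simp [embedIdx]

lemma embedIdx_of_notMem {α : Finset (Fin n)} (i k) (x : {x : Fin n // x ∉ α}) :
    embedIdx α i k x = k x := by
  simp [embedIdx, x.2]

lemma sum_embedIdx {M : Type*} [AddCommMonoid M] (α : Finset (Fin n))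
    (f : (Fin n → Fin 2) → M) : ∑ i, ∑ k, f (embedIdx α i k) = ∑ y, f y := by
  rw [← Fintype.sum_prod_type', ← (Equiv.piEquivPiSubtypeProd (· ∈ α) fun _ => Fin 2).symm.sum_comp]
  rfl

lemma trace_reduced (ρ : QMat n) (α : Finset (Fin n)) : (reduced ρ α).trace = ρ.trace :=
  sum_embedIdx α fun y => ρ y y

lemma posSemidef_reduced {ρ : QMat n} (hρ : ρ.PosSemidef) (α : Finset (Fin n)) :
    (reduced ρ α).PosSemidef := by
  have h : reduced ρ α = ∑ k, ρ.submatrix (embedIdx α · k) (embedIdx α · k) := by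
    ext i j
    simp [reduced, Matrix.sum_apply]
  rw [h]
  exact posSemidef_sum _ fun k _ => hρ.submatrix _

lemma re_trace_mul_self_le_sq {m : Type*} [Fintype m] {A : Matrix m m ℂ} (hA : A.PosSemidef) :
    (A * A).trace.re ≤ A.trace.re ^ 2 := by
  classical
  have hsq : (A * A).trace.re = ∑ i, hA.1.eigenvalues i ^ 2 := by
    conv_lhs => rw [hA.1.spectral_theorem, ← map_mul, Unitary.conjStarAlgAut_apply,
      trace_mul_cycle, Unitary.coe_star_mul_self, one_mul, diagonal_mul_diagonal, trace_diagonal]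
    simp [sq]
  rw [hsq, hA.1.trace_eq_sum_eigenvalues, Complex.re_sum]
  exact Finset.sum_sq_le_sq_sum_of_nonneg fun i _ => hA.eigenvalues_nonneg i

lemma CE_nonneg {ρ : QMat n} (hρ : ρ.PosSemidef) (hρ1 : ρ.trace = 1) (S : Finset (Fin n)) :
    0 ≤ CE ρ S := by
  have hpurity (α : Finset (Fin n)) : (reduced ρ α * reduced ρ α).trace.re ≤ 1 := by
    simpa [trace_reduced, hρ1] using re_trace_mul_self_le_sq (posSemidef_reduced hρ α)
  rw [CE, sub_nonneg]
  calc _ ≤ (1 / 2 : ℝ) ^ S.card * ∑ α ∈ S.powerset, 1 := by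
        gcongr with α
        exact hpurity α
    _ = 1 := by simp

/-- The matrix element `⟨p.2, q.2| SWAP_α |p.1, q.1⟩` of the operator on two copies of `n` qubits
which exchanges the copies of the qubits in `α`. -/
def swapEntry (α : Finset (Fin n)) (p q : (Fin n → Fin 2) × (Fin n → Fin 2)) : ℂ :=
  ∏ i, if i ∈ α then (if p.1 i = q.2 i ∧ q.1 i = p.2 i then 1 else 0)
    else (if p.1 i = p.2 i ∧ q.1 i = q.2 i then 1 else 0)

lemma swapEntry_embedIdx (α : Finset (Fin n)) (i i' j j' k k' l l') :
    swapEntry α (embedIdx α i k, embedIdx α i' k') (embedIdx α j l, embedIdx α j' l') =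
      if (i = j' ∧ j = i') ∧ k = k' ∧ l = l' then 1 else 0 := by
  have hsplit (x : Fin n) (P Q : Prop) [Decidable P] [Decidable Q] :
      (if x ∈ α then (if P then (1 : ℂ) else 0) else if Q then 1 else 0) =
        if (x ∈ α → P) ∧ (x ∉ α → Q) then 1 else 0 := by
    by_cases hx : x ∈ α <;> simp [hx]
  simp only [swapEntry, hsplit, Fintype.prod_ite_zero, Finset.prod_const_one]
  refine if_congr ?_ rfl rfl
  simp +contextual [embedIdx, forall_and, funext_iff, Subtype.forall]

lemma trace_reduced_mul_self (ρ : QMat n) (α : Finset (Fin n)) :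
    (reduced ρ α * reduced ρ α).trace =
      ∑ p, ∑ q : (Fin n → Fin 2) × (Fin n → Fin 2),
        ρ p.1 p.2 * ρ q.1 q.2 * swapEntry α p q := by
  simp only [Fintype.sum_prod_type, ← sum_embedIdx α, swapEntry_embedIdx, ite_and, mul_ite,
    mul_one, mul_zero, Finset.sum_ite_irrel, Finset.sum_const_zero, Finset.sum_ite_eq,
    Finset.sum_ite_eq', Finset.mem_univ, if_true]
  simp only [Matrix.trace, Matrix.diag, Matrix.mul_apply, reduced, Finset.sum_mul_sum]
  exact Finset.sum_congr rfl fun i _ => Finset.sum_comm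

end ReducedDensityMatrix

section LocalMeasurement

open scoped ComplexOrder

variable {n : ℕ} {ρ : QMat n} {S : Finset (Fin n)}

lemma mul_mul_conjTranspose_apply_self {m : Type*} [Fintype m] (U A : Matrix m m ℂ) (x : m) :
    (U * A * Uᴴ) x x = ∑ p : m × m, A p.1 p.2 * (U x p.1 * star (U x p.2)) := by
  simp only [mul_apply, conjTranspose_apply, Finset.sum_mul, Fintype.sum_prod_type_right]
  congr! 2
  ring

lemma localOp_conjTranspose (V : {i // i ∈ S} → Matrix (Fin 2) (Fin 2) ℂ) :
    (localOp S V)ᴴ = localOp S fun i => (V i)ᴴ := by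
  ext x y
  simp only [conjTranspose_apply, localOp, star_prod]
  congr! 1 with i
  split_ifs <;> simp_all [eq_comm]

lemma localOp_mul (V W : {i // i ∈ S} → Matrix (Fin 2) (Fin 2) ℂ) :
    localOp S V * localOp S W = localOp S fun i => V i * W i := by
  ext x y
  simp only [mul_apply, localOp, ← Finset.prod_mul_distrib]
  rw [← Fintype.piFinset_univ, ← Finset.prod_univ_sum (fun _ => Finset.univ) fun i a =>
    (if h : i ∈ S then V ⟨i, h⟩ (x i) a else if x i = a then 1 else 0) *
      (if h : i ∈ S then W ⟨i, h⟩ a (y i) else if a = y i then 1 else 0)]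
  congr! 1 with i
  by_cases h : i ∈ S <;> simp [h]

lemma localOp_one : localOp S (fun _ => 1) = 1 := by
  ext x y
  simp [localOp, one_apply, Fintype.prod_ite_zero, funext_iff]

lemma localOp_conjTranspose_mul_self (V : {i // i ∈ S} → unitaryGroup (Fin 2) ℂ) :
    (localOp S fun i => (V i).1)ᴴ * localOp S (fun i => (V i).1) = 1 := by
  have h (i) : (V i).1ᴴ * (V i).1 = 1 := mem_unitaryGroup_iff'.1 (V i).2
  simp only [localOp_conjTranspose, localOp_mul, h, localOp_one]

lemma localOp_embedIdx (V : {i // i ∈ S} → Matrix (Fin 2) (Fin 2) ℂ) (z)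
    (k : {i // i ∉ S} → Fin 2) (y : Fin n → Fin 2) :
    localOp S V (embedIdx S z k) y =
      (∏ i, V i (z i) (y i)) * if k = fun i : {i // i ∉ S} => y i then 1 else 0 := by
  rw [localOp, Fintype.prod_dite, Fintype.prod_ite_zero]
  simp only [embedIdx_of_mem, embedIdx_of_notMem, Finset.prod_const_one, funext_iff]
  congr!

lemma projZ_embedIdx (z i) (k : {i // i ∉ S} → Fin 2) (y : Fin n → Fin 2) :
    projZ S z (embedIdx S i k) y = if i = z ∧ y = embedIdx S i k then 1 else 0 := by
  have hsplit (x : Fin n) : (if h : x ∈ S then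
        (if embedIdx S i k x = z ⟨x, h⟩ ∧ y x = z ⟨x, h⟩ then (1 : ℂ) else 0)
      else if embedIdx S i k x = y x then 1 else 0) =
      if (∀ h : x ∈ S, i ⟨x, h⟩ = z ⟨x, h⟩) ∧ y x = embedIdx S i k x then 1 else 0 := by
    by_cases h : x ∈ S
    · by_cases hi : i ⟨x, h⟩ = z ⟨x, h⟩ <;> simp [embedIdx, h, hi]
    · simp [embedIdx, h, eq_comm]
  simp only [projZ, hsplit, Fintype.prod_ite_zero, Finset.prod_const_one, forall_and]
  simp only [funext_iff, Subtype.forall]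

lemma trace_mul_projZ (A : QMat n) (z : {i // i ∈ S} → Fin 2) :
    (A * projZ S z).trace = reduced A S z z := by
  rw [trace_mul_comm, Matrix.trace, ← sum_embedIdx S]
  simp only [diag_apply, mul_apply, projZ_embedIdx, ite_and, ite_mul, one_mul, zero_mul,
    Finset.sum_ite_irrel, Finset.sum_const_zero, Finset.sum_ite_eq', Finset.mem_univ, if_true,
    reduced]

/-- The state of the system after the local rotations `V i`, `i ∈ S`, have been applied to `ρ`. -/
noncomputable def rotated (ρ : QMat n) (S : Finset (Fin n))
    (V : {i // i ∈ S} → unitaryGroup (Fin 2) ℂ) : QMat n :=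
  localOp S (fun i => (V i).1) * ρ * (localOp S fun i => (V i).1)ᴴ

variable (V : {i // i ∈ S} → unitaryGroup (Fin 2) ℂ)

lemma posSemidef_rotated (hρ : ρ.PosSemidef) : (rotated ρ S V).PosSemidef :=
  hρ.mul_mul_conjTranspose_same _

lemma trace_rotated (ρ : QMat n) : (rotated ρ S V).trace = ρ.trace := by
  rw [rotated, trace_mul_cycle, localOp_conjTranspose_mul_self, one_mul]

lemma born_eq_re_reduced (ρ : QMat n) (z : {i // i ∈ S} → Fin 2) :
    born ρ S V z = (reduced (rotated ρ S V) S z z).re := by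
  rw [born, trace_mul_projZ, rotated]

lemma born_nonneg (hρ : ρ.PosSemidef) (z : {i // i ∈ S} → Fin 2) : 0 ≤ born ρ S V z := by
  rw [born_eq_re_reduced]
  exact (Complex.nonneg_iff.1 (posSemidef_reduced (posSemidef_rotated V hρ) S).diag_nonneg).1

lemma ofReal_born (hρ : ρ.PosSemidef) (z : {i // i ∈ S} → Fin 2) :
    (born ρ S V z : ℂ) = reduced (rotated ρ S V) S z z := by
  have h := (posSemidef_reduced (posSemidef_rotated V hρ) S).diag_nonneg (i := z)
  exact Complex.ext (born_eq_re_reduced V ρ z) (Complex.nonneg_iff.1 h).2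

lemma sum_born (ρ : QMat n) : ∑ z, born ρ S V z = ρ.trace.re := by
  rw [← trace_rotated V, ← trace_reduced _ S]
  simp only [born_eq_re_reduced, Matrix.trace, diag_apply, Complex.re_sum]

lemma reduced_rotated_apply_self (ρ : QMat n) (z : {i // i ∈ S} → Fin 2) :
    reduced (rotated ρ S V) S z z = ∑ p : (Fin n → Fin 2) × (Fin n → Fin 2),
      ρ p.1 p.2 * ((if ∀ i ∉ S, p.1 i = p.2 i then 1 else 0) *
        ∏ i, (V i).1 (z i) (p.1 i) * star ((V i).1 (z i) (p.2 i))) := by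
  simp only [reduced, rotated, mul_mul_conjTranspose_apply_self]
  rw [Finset.sum_comm]
  simp only [← Finset.mul_sum, localOp_embedIdx, Finset.prod_mul_distrib, star_mul', star_prod]
  congr! 2 with p
  simp only [apply_ite star, star_one, star_zero, mul_ite, ite_mul, mul_one, mul_zero, zero_mul,
    one_mul, Finset.sum_ite_eq', Finset.mem_univ, if_true]
  simp only [funext_iff, Subtype.forall, eq_comm]

end LocalMeasurement

section CollisionProbability

variable {n : ℕ}

lemma prod_add_mul_prod_compl {ι R : Type*} [Fintype ι] [DecidableEq ι] [CommSemiring R]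
    (S : Finset ι) (f g : ι → R) :
    (∏ i ∈ S, (f i + g i)) * ∏ i ∈ Sᶜ, f i =
      ∑ α ∈ S.powerset, ∏ i, if i ∈ α then g i else f i := by
  simp only [add_comm (f _), Finset.prod_add, Finset.sum_mul]
  refine Finset.sum_congr rfl fun α hα => ?_
  have hunion : S \ α ∪ Sᶜ = αᶜ := by
    rw [Finset.sdiff_eq_inter_compl, Finset.union_comm, Finset.union_inter_distrib_left,
      Finset.union_comm, Finset.union_compl, Finset.univ_inter, Finset.union_eq_right,
      Finset.compl_subset_compl]
    exact Finset.mem_powerset.1 hα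
  rw [mul_assoc, ← Finset.prod_union (disjoint_compl_right.mono_left Finset.sdiff_subset), hunion,
    Finset.prod_ite, Finset.filter_univ_mem, Finset.compl_eq_univ_sdiff,
    Finset.filter_notMem_eq_sdiff]

lemma prod_rowMoment_eq_sum_swapEntry (μ : Measure (unitaryGroup (Fin 2) ℂ))
    [IsProbabilityMeasure μ] [μ.IsMulRightInvariant] (S : Finset (Fin n)) (z : {i // i ∈ S} → Fin 2)
    (p q : (Fin n → Fin 2) × (Fin n → Fin 2)) :
    ((if ∀ i ∉ S, p.1 i = p.2 i then 1 else 0) * if ∀ i ∉ S, q.1 i = q.2 i then 1 else 0) *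
        ∏ i, rowMoment μ (z i) (p.1 i) (p.2 i) (q.1 i) (q.2 i) =
      (1 / 6) ^ S.card * ∑ α ∈ S.powerset, swapEntry α p q := by
  have hcompl : ((if ∀ i ∉ S, p.1 i = p.2 i then (1 : ℂ) else 0) *
      if ∀ i ∉ S, q.1 i = q.2 i then 1 else 0) =
      ∏ i ∈ Sᶜ, if p.1 i = p.2 i ∧ q.1 i = q.2 i then 1 else 0 := by
    simp only [Finset.prod_ite_zero, Finset.mem_compl, Finset.prod_const_one, ite_and,
      ite_mul, one_mul, zero_mul]
  simp only [swapEntry, ← prod_add_mul_prod_compl, hcompl, rowMoment_eq, Fintype.card_fin,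
    Finset.prod_mul_distrib, Finset.prod_const, Finset.card_univ, Fintype.card_coe]
  rw [Finset.prod_coe_sort S fun i => (if p.1 i = p.2 i ∧ q.1 i = q.2 i then (1 : ℂ) else 0) +
    if p.1 i = q.2 i ∧ q.1 i = p.2 i then 1 else 0]
  norm_num
  ring

lemma integral_reduced_rotated_sq (μ : Measure (unitaryGroup (Fin 2) ℂ))
    [IsProbabilityMeasure μ] [μ.IsMulRightInvariant] (ρ : QMat n) (S : Finset (Fin n))
    (z : {i // i ∈ S} → Fin 2) :
    ∫ V, reduced (rotated ρ S V) S z z * reduced (rotated ρ S V) S z z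
        ∂(Measure.pi fun _ : {i // i ∈ S} => μ) =
      (1 / 6) ^ S.card * ∑ α ∈ S.powerset, (reduced ρ α * reduced ρ α).trace := by
  let c (p q : (Fin n → Fin 2) × (Fin n → Fin 2)) : ℂ := ρ p.1 p.2 * ρ q.1 q.2 *
    ((if ∀ i ∉ S, p.1 i = p.2 i then 1 else 0) * if ∀ i ∉ S, q.1 i = q.2 i then 1 else 0)
  let F (p q : (Fin n → Fin 2) × (Fin n → Fin 2)) (i : {i // i ∈ S})
      (U : unitaryGroup (Fin 2) ℂ) : ℂ :=
    U.1 (z i) (p.1 i) * star (U.1 (z i) (p.2 i)) * (U.1 (z i) (q.1 i) * star (U.1 (z i) (q.2 i)))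
  have hexpand (V : {i // i ∈ S} → unitaryGroup (Fin 2) ℂ) :
      reduced (rotated ρ S V) S z z * reduced (rotated ρ S V) S z z =
        ∑ p, ∑ q, c p q * ∏ i, F p q i (V i) := by
    simp only [reduced_rotated_apply_self, Finset.sum_mul_sum, c, F, Finset.prod_mul_distrib]
    exact Finset.sum_congr rfl fun p _ => Finset.sum_congr rfl fun q _ => by ring
  have hint (p q) : Integrable (fun V : {i // i ∈ S} → unitaryGroup (Fin 2) ℂ =>
      c p q * ∏ i, F p q i (V i)) (Measure.pi fun _ => μ) :=
    (Integrable.fintype_prod (𝕜 := ℂ) fun i => integrable_rowMoment μ _ _ _ _ _).const_mul _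
  have hval (p q) : ∫ V : {i // i ∈ S} → unitaryGroup (Fin 2) ℂ,
      c p q * ∏ i, F p q i (V i) ∂(Measure.pi fun _ => μ) =
        (1 / 6) ^ S.card * ∑ α ∈ S.powerset, ρ p.1 p.2 * ρ q.1 q.2 * swapEntry α p q := by
    rw [integral_const_mul, integral_fintype_prod_eq_prod (𝕜 := ℂ), ← Finset.mul_sum,
      mul_left_comm, ← prod_rowMoment_eq_sum_swapEntry μ S z, mul_assoc]
    rfl
  simp only [hexpand]
  rw [integral_finsetSum _ fun p _ => integrable_finsetSum _ fun q _ => hint p q]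
  simp only [integral_finsetSum _ fun q _ => hint _ q, hval, trace_reduced_mul_self,
    ← Finset.mul_sum]
  congr 1
  simp only [Finset.mul_sum]
  exact (Finset.sum_congr rfl fun p _ => Finset.sum_comm).trans Finset.sum_comm

end CollisionProbability

section JointRound

open scoped ComplexOrder

variable {n : ℕ} {ρ : QMat n} {S : Finset (Fin n)}

lemma measurable_born (ρ : QMat n) (z : {i // i ∈ S} → Fin 2) :
    Measurable fun V => born ρ S V z := by
  have hentry (i : {i // i ∈ S}) (a b : Fin 2) :
      Measurable fun V : {i // i ∈ S} → unitaryGroup (Fin 2) ℂ => (V i).1 a b :=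
    (continuous_subtype_val.matrix_elem a b).measurable.comp (measurable_pi_apply i)
  have hstar : Measurable (star : ℂ → ℂ) := continuous_star.measurable
  simp only [born_eq_re_reduced, reduced_rotated_apply_self]
  refine Complex.measurable_re.comp (Finset.measurable_fun_sum _ fun p _ => ?_)
  exact ((Finset.measurable_fun_prod _ fun i _ =>
    (hentry i _ _).mul (hstar.comp (hentry i _ _))).const_mul _).const_mul _

lemma bornMeasure_singleton (ρ : QMat n) (V : {i // i ∈ S} → unitaryGroup (Fin 2) ℂ)
    (z : {i // i ∈ S} → Fin 2) : bornMeasure ρ S V {z} = ENNReal.ofReal (born ρ S V z) := by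
  simp [bornMeasure, Measure.finsetSum_apply, Set.indicator_apply]

lemma isProbabilityMeasure_bornMeasure (hρ : ρ.PosSemidef) (hρ1 : ρ.trace = 1)
    (V : {i // i ∈ S} → unitaryGroup (Fin 2) ℂ) : IsProbabilityMeasure (bornMeasure ρ S V) := by
  refine ⟨?_⟩
  simp only [bornMeasure, Measure.finsetSum_apply, Measure.smul_apply, measure_univ, smul_eq_mul,
    mul_one]
  rw [← ENNReal.ofReal_sum_of_nonneg fun z _ => born_nonneg V hρ z, sum_born, hρ1,
    Complex.one_re, ENNReal.ofReal_one]

lemma measurable_map_prodMk {α β : Type*} [MeasurableSpace α] [MeasurableSpace β] [Finite β]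
    [MeasurableSingletonClass β] {κ : α → Measure β} (hκ : ∀ b, Measurable fun a => κ a {b}) :
    Measurable fun a => (κ a).map (Prod.mk a) := by
  classical
  have := Fintype.ofFinite β
  refine Measure.measurable_of_measurable_coe _ fun s hs => ?_
  have hsum (a : α) : (κ a).map (Prod.mk a) s =
      ∑ b, {a | (a, b) ∈ s}.indicator (fun a => κ a {b}) a := by
    rw [Measure.map_apply measurable_prodMk_left hs,
      ← lintegral_indicator_one (measurable_prodMk_left hs), lintegral_fintype]
    simp [Set.indicator_apply]
  rw [funext hsum]
  exact Finset.measurable_fun_sum _ fun b _ => (hκ b).indicator (measurable_prodMk_right hs)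

lemma measurable_map_pi_bornMeasure (hρ : ρ.PosSemidef) (hρ1 : ρ.trace = 1) (K : ℕ) :
    Measurable fun V => (Measure.pi fun _ : Fin K => bornMeasure ρ S V).map (Prod.mk V) := by
  refine measurable_map_prodMk fun w => ?_
  have := isProbabilityMeasure_bornMeasure (S := S) hρ hρ1
  simp only [Measure.pi_singleton, bornMeasure_singleton]
  exact Finset.measurable_fun_prod _ fun k _ => (measurable_born ρ (w k)).ennreal_ofReal

variable (μ : Measure (unitaryGroup (Fin 2) ℂ)) [IsProbabilityMeasure μ]

lemma isProbabilityMeasure_jointRound (hρ : ρ.PosSemidef) (hρ1 : ρ.trace = 1)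
    (S : Finset (Fin n)) (K : ℕ) : IsProbabilityMeasure (jointRound μ ρ S K) := by
  refine isProbabilityMeasure_bind (measurable_map_pi_bornMeasure hρ hρ1 K).aemeasurable
    (.of_forall fun V => ?_)
  have := isProbabilityMeasure_bornMeasure hρ hρ1 V
  exact Measure.isProbabilityMeasure_map measurable_prodMk_left.aemeasurable

lemma measurableSet_collision {α β : Type*} [MeasurableSpace α] [MeasurableSpace β] [Finite β]
    [MeasurableSingletonClass β] :
    MeasurableSet {ω : α × (Fin 2 → β) | ω.2 0 = ω.2 1} :=
  measurableSet_eq_fun (by fun_prop) (by fun_prop)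

lemma pi_collision_eq_sum_sq {β : Type*} [MeasurableSpace β] [Fintype β]
    [MeasurableSingletonClass β] (ν : Measure β) [SigmaFinite ν] :
    (Measure.pi fun _ : Fin 2 => ν) {w | w 0 = w 1} = ∑ z, ν {z} ^ 2 := by
  classical
  have hset : {w : Fin 2 → β | w 0 = w 1} =
      (Finset.univ.image fun (z : β) (_ : Fin 2) => z : Finset (Fin 2 → β)) := by
    ext w
    simp [funext_iff, Fin.forall_fin_two, eq_comm]
  rw [hset, ← sum_measure_singleton, Finset.sum_image fun x _ y _ h => congrFun h 0]
  simp [Measure.pi_singleton, sq]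

lemma integral_born_sq [μ.IsMulRightInvariant] (hρ : ρ.PosSemidef) (z : {i // i ∈ S} → Fin 2) :
    ∫ V, born ρ S V z ^ 2 ∂(Measure.pi fun _ => μ) =
      (1 / 6) ^ S.card * ∑ α ∈ S.powerset, (reduced ρ α * reduced ρ α).trace.re := by
  have h := congrArg Complex.re (integral_reduced_rotated_sq μ ρ S z)
  simp only [← ofReal_born _ hρ, ← Complex.ofReal_mul] at h
  rw [integral_complex_ofReal, Complex.ofReal_re] at h
  simp only [sq, h, ← Complex.re_sum, ← Complex.re_ofReal_mul]
  norm_num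

lemma integrable_born_sq (hρ : ρ.PosSemidef) (hρ1 : ρ.trace = 1) (z : {i // i ∈ S} → Fin 2) :
    Integrable (fun V => born ρ S V z ^ 2) (Measure.pi fun _ => μ) := by
  refine .of_bound ((measurable_born ρ z).pow_const 2).aestronglyMeasurable 1
    (.of_forall fun V => ?_)
  have hle : born ρ S V z ≤ 1 := calc
    _ ≤ ∑ z, born ρ S V z :=
      Finset.single_le_sum (fun z _ => born_nonneg V hρ z) (Finset.mem_univ z)
    _ = 1 := by rw [sum_born, hρ1, Complex.one_re]
  rw [Real.norm_of_nonneg (sq_nonneg _)]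
  exact pow_le_one₀ (born_nonneg V hρ z) hle

lemma jointRound_collision [μ.IsMulRightInvariant] (hρ : ρ.PosSemidef) (hρ1 : ρ.trace = 1)
    (S : Finset (Fin n)) :
    (jointRound μ ρ S 2).real {ω | ω.2 0 = ω.2 1} =
      (1 / 3) ^ S.card * ∑ α ∈ S.powerset, (reduced ρ α * reduced ρ α).trace.re := by
  have hcond (V : {i // i ∈ S} → unitaryGroup (Fin 2) ℂ) :
      (Measure.pi fun _ : Fin 2 => bornMeasure ρ S V).map (Prod.mk V) {ω | ω.2 0 = ω.2 1} =
        ENNReal.ofReal (∑ z, born ρ S V z ^ 2) := by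
    have := isProbabilityMeasure_bornMeasure hρ hρ1 V
    rw [Measure.map_apply measurable_prodMk_left measurableSet_collision,
      ENNReal.ofReal_sum_of_nonneg fun z _ => sq_nonneg _]
    simp only [ENNReal.ofReal_pow (born_nonneg V hρ _), ← bornMeasure_singleton]
    exact pi_collision_eq_sum_sq (bornMeasure ρ S V)
  have hnonneg (V) : 0 ≤ ∑ z, born ρ S V z ^ 2 := Finset.sum_nonneg fun z _ => sq_nonneg _
  have hint := integrable_born_sq (S := S) μ hρ hρ1
  calc (jointRound μ ρ S 2).real {ω | ω.2 0 = ω.2 1}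
      = ∫ V, ∑ z, born ρ S V z ^ 2 ∂(Measure.pi fun _ => μ) := by
        rw [measureReal_def, jointRound, Measure.bind_apply measurableSet_collision
          (measurable_map_pi_bornMeasure hρ hρ1 2).aemeasurable]
        simp only [hcond]
        rw [← ofReal_integral_eq_lintegral_ofReal (integrable_finsetSum _ fun z _ => hint z)
          (.of_forall hnonneg), ENNReal.toReal_ofReal (integral_nonneg hnonneg)]
    _ = 2 ^ S.card *
          ((1 / 6) ^ S.card * ∑ α ∈ S.powerset, (reduced ρ α * reduced ρ α).trace.re) := by
        simp [integral_finsetSum _ fun z _ => hint z, integral_born_sq μ hρ]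
    _ = (1 / 3) ^ S.card * ∑ α ∈ S.powerset, (reduced ρ α * reduced ρ α).trace.re := by
        rw [← mul_assoc, ← mul_pow]
        norm_num

end JointRound

section CollisionEstimator

open scoped ComplexOrder

variable {n : ℕ} {ρ : QMat n}

/-- The unbiased estimator of the concentratable entanglement from one round with two shots:
`1 - (3/2) ^ |S|` if the two outcome strings collide and `1` otherwise. -/
noncomputable def collisionEstimator (S : Finset (Fin n))
    (ω : ({i // i ∈ S} → unitaryGroup (Fin 2) ℂ) × (Fin 2 → {i // i ∈ S} → Fin 2)) : ℝ :=
  1 - (3 / 2) ^ S.card * if ω.2 0 = ω.2 1 then 1 else 0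

lemma measurable_collisionEstimator (S : Finset (Fin n)) : Measurable (collisionEstimator S) :=
  measurable_const.sub
    ((Measurable.ite measurableSet_collision measurable_const measurable_const).const_mul _)

lemma collisionEstimator_mem_Icc (S : Finset (Fin n)) (ω) :
    collisionEstimator S ω ∈ Set.Icc (1 - (3 / 2 : ℝ) ^ S.card) 1 := by
  have h : (0 : ℝ) ≤ (3 / 2) ^ S.card := by positivity
  rw [collisionEstimator]
  split_ifs <;> constructor <;> linarith

lemma memLp_collisionEstimator (S : Finset (Fin n)) (ν : Measure _) [IsFiniteMeasure ν] :
    MemLp (collisionEstimator S) 2 ν :=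
  memLp_of_bounded (.of_forall (collisionEstimator_mem_Icc S))
    (measurable_collisionEstimator S).aestronglyMeasurable 2

lemma mean_collisionEstimator (S : Finset (Fin n)) {B : ℕ} (hB : 0 < B)
    (ω : Fin B → ({i // i ∈ S} → unitaryGroup (Fin 2) ℂ) × (Fin 2 → {i // i ∈ S} → Fin 2)) :
    (1 / (B : ℝ)) * ∑ l, collisionEstimator S (ω l) =
      1 - (3 / 2) ^ S.card * ((1 / B) * ∑ l, if (ω l).2 0 = (ω l).2 1 then 1 else 0) := by
  simp only [collisionEstimator, Finset.sum_sub_distrib, ← Finset.mul_sum, Finset.sum_const,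
    Finset.card_univ, Fintype.card_fin, nsmul_eq_mul]
  field_simp

variable (μ : Measure (unitaryGroup (Fin 2) ℂ)) [IsProbabilityMeasure μ] [μ.IsMulRightInvariant]

lemma integral_collisionEstimator (hρ : ρ.PosSemidef) (hρ1 : ρ.trace = 1) (S : Finset (Fin n)) :
    ∫ ω, collisionEstimator S ω ∂jointRound μ ρ S 2 = CE ρ S := by
  have := isProbabilityMeasure_jointRound μ hρ hρ1 S 2
  have hind (ω : ({i // i ∈ S} → unitaryGroup (Fin 2) ℂ) × (Fin 2 → {i // i ∈ S} → Fin 2)) :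
      (if ω.2 0 = ω.2 1 then (1 : ℝ) else 0) = Set.indicator {ω | ω.2 0 = ω.2 1} 1 ω := by
    simp [Set.indicator_apply]
  simp only [collisionEstimator, hind]
  rw [integral_sub (integrable_const _) (((integrable_const 1).indicator
    measurableSet_collision).const_mul _), integral_const_mul,
    integral_indicator_one measurableSet_collision, jointRound_collision μ hρ hρ1, CE,
    ← mul_assoc, ← mul_pow]
  norm_num

lemma variance_collisionEstimator_le (hρ : ρ.PosSemidef) (hρ1 : ρ.trace = 1)
    (S : Finset (Fin n)) :
    ProbabilityTheory.variance (collisionEstimator S) (jointRound μ ρ S 2) ≤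
      (3 / 2) ^ S.card := by
  have := isProbabilityMeasure_jointRound μ hρ hρ1 S 2
  have hmean_le : CE ρ S ≤ 1 := by
    rw [← integral_collisionEstimator μ hρ hρ1]
    refine (integral_mono ((memLp_collisionEstimator S _).integrable one_le_two)
      (integrable_const 1) fun ω => (collisionEstimator_mem_Icc S ω).2).trans ?_
    simp
  have hCE := CE_nonneg hρ hρ1 S
  have hone : (1 : ℝ) ≤ (3 / 2) ^ S.card := one_le_pow₀ (by norm_num)
  calc ProbabilityTheory.variance (collisionEstimator S) (jointRound μ ρ S 2)
      ≤ (1 - CE ρ S) * (CE ρ S - (1 - (3 / 2) ^ S.card)) := by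
        rw [← integral_collisionEstimator μ hρ hρ1]
        exact ProbabilityTheory.variance_le_sub_mul_sub
          (.of_forall (collisionEstimator_mem_Icc S)) (measurable_collisionEstimator S).aemeasurable
    _ ≤ (3 / 2) ^ S.card := by nlinarith

end CollisionEstimator

open scoped ComplexOrder in
theorem LRM_MoM_estimator_general {n : ℕ} {ρ : QMat n} (hρ : ρ.PosSemidef) (hρ1 : ρ.trace = 1)
    (S : Finset (Fin n)) (μ : Measure (unitaryGroup (Fin 2) ℂ)) [IsProbabilityMeasure μ]
    [μ.IsMulRightInvariant] {ε δ : ℝ} (hε : 0 < ε) (hδ : 0 < δ) {NB B : ℕ}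
    (hNB : 8 * Real.log (1 / δ) ≤ NB) (hB : 4 * (3 / 2) ^ S.card / ε ^ 2 ≤ B) :
    (Measure.pi fun _ : Fin NB × Fin B => jointRound μ ρ S 2)
      {ω | ∃ m, IsMedian (fun b => 1 - (3 / 2) ^ S.card *
          ((1 / B) * ∑ l, if (ω (b, l)).2 0 = (ω (b, l)).2 1 then 1 else 0)) m ∧
        ε ≤ |m - CE ρ S|} ≤ ENNReal.ofReal δ := by
  have := isProbabilityMeasure_jointRound μ hρ hρ1 S 2
  have hBpos : 0 < B := Nat.cast_pos.1 (lt_of_lt_of_le (by positivity) hB)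
  have hvar : 4 * ProbabilityTheory.variance (collisionEstimator S) (jointRound μ ρ S 2) ≤
      B * ε ^ 2 := by
    rw [div_le_iff₀ (by positivity)] at hB
    linarith [variance_collisionEstimator_le μ hρ hρ1 S]
  simpa only [integral_collisionEstimator μ hρ hρ1, mean_collisionEstimator S hBpos] using
    pi_exists_isMedian_deviation_le (memLp_collisionEstimator S _) hε hδ hNB hBpos hvar

/-- **CE estimation via median-of-means and LRMs**: with `N_B = ⌈8 log(1/δ)⌉` batches of
`B = ⌈4(3/2)^s/ε²⌉` rounds (two shots per random unitary), any median of the batch means is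
`ε`-close to `C_ψ(S)` with probability at least `1 - δ`. -/
theorem LRM_MoM_estimator (n : ℕ) (ψ : (Fin n → Fin 2) → ℂ)
    (hψ : (∑ x, star (ψ x) * ψ x) = 1)
    (S : Finset (Fin n)) (hS : S.Nonempty)
    (μ : Measure (Matrix.unitaryGroup (Fin 2) ℂ)) [μ.IsHaarMeasure] [IsProbabilityMeasure μ]
    (ε δ : ℝ) (hε : 0 < ε) (hδ0 : 0 < δ) (hδ1 : δ < 1) (NB B : ℕ)
    (hNB : NB = ⌈8 * Real.log (1 / δ)⌉₊)
    (hB : B = ⌈4 * (3 / 2 : ℝ) ^ S.card / ε ^ 2⌉₊)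
    (med : (Fin NB → ℝ) → ℝ) (hmed : ∀ x, IsMedian x (med x)) :
    (Measure.pi fun _ : Fin NB × Fin B => jointRound μ (Matrix.vecMulVec ψ (star ψ)) S 2)
      {ω | ε ≤ |med (fun b => 1 - (3 / 2 : ℝ) ^ S.card *
              ((1 / (B : ℝ)) * ∑ l : Fin B, if (ω (b, l)).2 0 = (ω (b, l)).2 1 then 1 else 0))
            - CE (Matrix.vecMulVec ψ (star ψ)) S|}
      ≤ ENNReal.ofReal δ := by
  have := isMulRightInvariant_of_compactSpace μ
  have htrace : (Matrix.vecMulVec ψ (star ψ)).trace = 1 := by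
    rw [← hψ]
    simp [Matrix.trace, Matrix.vecMulVec_apply, mul_comm]
  refine (measure_mono fun ω hω => ?_).trans (LRM_MoM_estimator_general
    (open scoped ComplexOrder in posSemidef_vecMulVec_self_star ψ) htrace S μ hε hδ0
    (hNB ▸ Nat.le_ceil _) (hB ▸ Nat.le_ceil _))
  exact ⟨_, hmed _, hω⟩
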